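/- For all n ≥ 0 and 0 ≤ ℓ ≤ n, totalB(n,ℓ) = (n(2ℓ+1)/(n+ℓ+1)) * C(2n, n-ℓ) − C(2n, n-2ℓ-1) − 2 * ∑_{j=ℓ+1}^{2ℓ} C(2n, n-j), where totalB(n,ℓ) is the sum over all ordered trees T with n edges and all nodes v at level ℓ of the number of nodes visited before v in breadth-first search. -/

import Mathlib

open scoped Classical

/-- Height (number of up-steps minus number of down-steps) after the first `k` steps
of the word `w`, where `true` encodes an up-step and `false` a down-step. -/
def heightAt (n : ℕ) (w : Fin n → Bool) (k : ℕ) : ℤ :=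
  ((Finset.univ.filter (fun i : Fin n => (i : ℕ) < k ∧ w i = true)).card : ℤ) -
  ((Finset.univ.filter (fun i : Fin n => (i : ℕ) < k ∧ w i = false)).card : ℤ)

/-- `w` is a Dyck word of semilength `n` (the standard encoding of an ordered tree
with `n` edges via its pre-order traversal: `true` = step away from the root). -/
def IsDyck (n : ℕ) (w : Fin (2 * n) → Bool) : Prop :=
  (Finset.univ.filter (fun i : Fin (2 * n) => w i = true)).card = n ∧
  ∀ k : ℕ, k ≤ 2 * n → 0 ≤ heightAt (2 * n) w k

/-- The ordered trees with `n` edges, encoded as Dyck words. -/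
noncomputable def dyckWords (n : ℕ) : Finset (Fin (2 * n) → Bool) :=
  Finset.univ.filter (fun w => IsDyck n w)

/-- The nodes of the tree encoded by `w` : `none` is the root and `some i` for an
up-step `i` (`w i = true`) is the node this step leads to. -/
def isNode (n : ℕ) (w : Fin (2 * n) → Bool) : Option (Fin (2 * n)) → Prop
  | none => True
  | some i => w i = true

/-- The level (distance to the root) of a node. -/
def nodeLevel (n : ℕ) (w : Fin (2 * n) → Bool) : Option (Fin (2 * n)) → ℤ
  | none => 0
  | some i => heightAt (2 * n) w ((i : ℕ) + 1)

/-- The set of nodes at level `ℓ` of the tree encoded by `w`. -/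
noncomputable def nodesAtLevel (n : ℕ) (w : Fin (2 * n) → Bool) (ℓ : ℕ) :
    Finset (Option (Fin (2 * n))) :=
  Finset.univ.filter (fun v => isNode n w v ∧ nodeLevel n w v = (ℓ : ℤ))

/-- The number of nodes visited before the given node in the depth-first (pre-order)
traversal: the root comes first, and the non-root nodes appear in the order of their
up-steps in the Dyck word. -/
noncomputable def dfsScore (n : ℕ) (w : Fin (2 * n) → Bool) : Option (Fin (2 * n)) → ℕ
  | none => 0
  | some i => 1 +
      (Finset.univ.filter (fun j : Fin (2 * n) => (j : ℕ) < (i : ℕ) ∧ w j = true)).card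

/-- The number of nodes visited before the given node in breadth-first search:
nodes are visited level by level, and from left to right within a level. -/
noncomputable def bfsScore (n : ℕ) (w : Fin (2 * n) → Bool) : Option (Fin (2 * n)) → ℕ
  | none => 0
  | some i => 1 +
      (Finset.univ.filter (fun j : Fin (2 * n) =>
        w j = true ∧ (nodeLevel n w (some j) < nodeLevel n w (some i) ∨
          (nodeLevel n w (some j) = nodeLevel n w (some i) ∧ (j : ℕ) < (i : ℕ))))).card

/-- Sum of the dfs scores of all nodes at level `ℓ` over all ordered trees with `n` edges. -/
noncomputable def totalD (n ℓ : ℕ) : ℕ :=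
  ∑ w ∈ dyckWords n, ∑ v ∈ nodesAtLevel n w ℓ, dfsScore n w v

/-- Sum of the bfs scores of all nodes at level `ℓ` over all ordered trees with `n` edges. -/
noncomputable def totalB (n ℓ : ℕ) : ℕ :=
  ∑ w ∈ dyckWords n, ∑ v ∈ nodesAtLevel n w ℓ, bfsScore n w v

/-- Total number of nodes at level `ℓ` among all ordered trees with `n` edges. -/
noncomputable def levelCount (n ℓ : ℕ) : ℕ :=
  ∑ w ∈ dyckWords n, (nodesAtLevel n w ℓ).card

/-- Binomial coefficient with an integer lower index: zero when the lower index is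
negative. -/
def ch (N : ℕ) (k : ℤ) : ℚ := if 0 ≤ k then (N.choose k.toNat : ℚ) else 0

/-!
In breadth-first order a node at level `ℓ ≥ 1` is preceded by the root, by all nodes at the levels
`1, …, ℓ - 1`, and by the nodes to its left at level `ℓ`. Non-root nodes are up-steps of the Dyck
word, and two nodes at different levels occur in one of two orders in the word, so `totalB n ℓ` is a
sum of numbers of nonnegative paths in which one up-step, or an ordered pair of up-steps, into
prescribed levels has been marked.

As a function of the number of remaining steps and of the current height, each of these numbers
solves the first-step recurrence of a walk absorbed at height `-1`, with a source just below the
level of the first marked step: the number of ways to mark the rest of the path. By the method of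
images a source `walkCount m c` has an explicit solution in terms of tail sums of `walkCount`, and
for one marked step these tail sums telescope, so the source for a second marked step is again a
difference of two values of `walkCount m`. Paths starting at height `0` then give differences of
values of `walkCount (2 * n)` at even heights, which are binomial coefficients.
-/

section

open Finset

/-- The number of pairs `a < b` with `a ∈ s` and `b ∈ t`. -/
def ltPairs {α : Type*} [LinearOrder α] (s t : Finset α) : ℕ :=
  ∑ a ∈ s, #{b ∈ t | a < b}

theorem ltPairs_eq_sum_card_filter_gt {α : Type*} [LinearOrder α] (s t : Finset α) :
    ltPairs s t = ∑ b ∈ t, #{a ∈ s | a < b} :=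
  sum_card_bipartiteAbove_eq_sum_card_bipartiteBelow (· < ·)

theorem card_mul_card_eq_ltPairs_add_ltPairs {α : Type*} [LinearOrder α] {s t : Finset α}
    (hst : Disjoint s t) : #s * #t = ltPairs s t + ltPairs t s := by
  rw [ltPairs_eq_sum_card_filter_gt t s, ltPairs, ← sum_add_distrib, ← smul_eq_mul, ← sum_const]
  refine sum_congr rfl fun a ha => ?_
  have not_lt_iff : ∀ b ∈ t, ¬ a < b ↔ b < a := fun b hb =>
    ⟨fun hab => (not_lt.mp hab).lt_of_ne (disjoint_left.mp hst ha <| · ▸ hb), fun h => h.not_gt⟩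
  rw [← card_filter_add_card_filter_not (s := t) (a < ·), filter_congr not_lt_iff]

theorem ch_succ (N : ℕ) (k : ℤ) : ch (N + 1) k = ch N k + ch N (k - 1) := by
  rcases lt_trichotomy k 0 with hk | rfl | hk
  · simp [ch, hk.not_ge, show ¬ 1 ≤ k by omega]
  · simp [ch]
  · obtain ⟨r, rfl⟩ : ∃ r : ℕ, k = r + 1 := ⟨(k - 1).toNat, by omega⟩
    rw [add_sub_cancel_right]
    simp only [ch, Int.natCast_nonneg, if_true, Int.toNat_natCast, show (0 : ℤ) ≤ r + 1 by omega,
      Int.toNat_natCast_add_one]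
    rw [Nat.choose_succ_succ, Nat.cast_add, add_comm]

theorem ch_add_one_mul (N : ℕ) (k : ℤ) : ch N (k + 1) * (k + 1) = ch N k * (N - k) := by
  rcases lt_trichotomy k (-1) with hk | rfl | hk
  · simp [ch, show ¬ 0 ≤ k + 1 by omega, show ¬ 0 ≤ k by omega]
  · simp [ch]
  · obtain ⟨r, rfl⟩ := Int.eq_ofNat_of_zero_le (show 0 ≤ k by omega)
    simp only [ch, Int.natCast_nonneg, if_true, Int.toNat_natCast, show (0 : ℤ) ≤ r + 1 by omega,
      Int.toNat_natCast_add_one, Int.cast_natCast]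
    rcases le_or_gt r N with hr | hr
    · rw [← Nat.cast_sub hr]
      exact_mod_cast Nat.choose_succ_right_eq N r
    · simp [Nat.choose_eq_zero_of_lt hr, Nat.choose_eq_zero_of_lt (hr.trans r.lt_succ_self)]

theorem mul_choose_eq_add_ch {n ℓ : ℕ} (h : ℓ ≤ n) :
    (n : ℚ) * (2 * ℓ + 1) / (n + ℓ + 1) * Nat.choose (2 * n) (n - ℓ) =
      ℓ * ch (2 * n) (n - ℓ) + (ℓ + 1) * ch (2 * n) (n - (ℓ + 1)) := by
  have choose_eq : (Nat.choose (2 * n) (n - ℓ) : ℚ) = ch (2 * n) (n - ℓ) := by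
    rw [ch, if_pos (by omega), show ((n : ℤ) - ℓ).toNat = n - ℓ by omega]
  have ratio := ch_add_one_mul (2 * n) (n - (ℓ + 1))
  rw [show (n : ℤ) - (ℓ + 1) + 1 = n - ℓ by ring] at ratio
  push_cast at ratio
  have : (n : ℚ) + ℓ + 1 ≠ 0 := by positivity
  rw [choose_eq]
  field_simp
  linear_combination ((ℓ : ℚ) + 1) * ratio

/-! ### Walks on the half-line -/

/-- The number of walks with `m` steps `±1` from height `d` to height `0`. -/
def walkCount : ℕ → ℤ → ℤ
  | 0, d => if d = 0 then 1 else 0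
  | m + 1, d => walkCount m (d + 1) + walkCount m (d - 1)

/-- The number of walks with `m` steps `±1` from height `d` to a negative odd height, that is, the
tail sum of the values `walkCount m (d + 1 + 2 * i)` with `i ≥ 0`. -/
def walkTail : ℕ → ℤ → ℤ
  | 0, d => if d < 0 ∧ Odd d then 1 else 0
  | m + 1, d => walkTail m (d + 1) + walkTail m (d - 1)

theorem walkCount_neg (m : ℕ) (d : ℤ) : walkCount m (-d) = walkCount m d := by
  induction m generalizing d with
  | zero => simp [walkCount]
  | succ m ih =>
    rw [walkCount, walkCount, ← ih (d + 1), ← ih (d - 1)]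
    ring_nf

theorem walkCount_eq_ch (m : ℕ) (k : ℤ) : (walkCount m (m - 2 * k) : ℚ) = ch m k := by
  induction m generalizing k with
  | zero =>
    rcases lt_trichotomy k 0 with hk | rfl | hk
    · simp [walkCount, ch, hk.ne, hk.not_ge]
    · simp [walkCount, ch]
    · simp [walkCount, ch, hk.ne', hk.le, Nat.choose_eq_zero_of_lt (show 0 < k.toNat by omega)]
  | succ m ih =>
    rw [ch_succ, ← ih, ← ih, walkCount, Int.cast_add, add_comm]
    push_cast
    ring_nf

theorem walkCount_two_mul_eq_ch (n : ℕ) (j : ℤ) :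
    (walkCount (2 * n) (2 * j) : ℚ) = ch (2 * n) (n - j) := by
  rw [← walkCount_eq_ch]
  push_cast
  ring_nf

theorem walkTail_sub (m : ℕ) (d : ℤ) :
    walkTail m (d - 1) - walkTail m (d + 1) = walkCount m d := by
  induction m generalizing d with
  | zero =>
    simp only [walkTail, walkCount, Int.odd_iff]
    split_ifs <;> omega
  | succ m ih =>
    rw [walkTail, walkTail, walkCount, ← ih (d + 1), ← ih (d - 1)]
    ring_nf

theorem walkTail_zero_of_nonneg {d : ℤ} (hd : 0 ≤ d) : walkTail 0 d = 0 :=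
  if_neg fun h => hd.not_gt h.1

theorem walkTail_succ_add_abs (c : ℤ) (m : ℕ) (x : ℤ) :
    walkTail (m + 1) (c + |x|) = walkTail m (c + |x + 1|) + walkTail m (c + |x - 1|)
      + if x = 0 then walkCount m c else 0 := by
  rw [walkTail, ← walkTail_sub]
  rcases lt_trichotomy x 0 with hx | rfl | hx
  · rw [if_neg hx.ne, abs_of_neg hx, abs_of_nonpos (by omega), abs_of_neg (by omega)]
    ring_nf
  · norm_num
  · rw [if_neg hx.ne', abs_of_pos hx, abs_of_pos (by omega), abs_of_nonneg (by omega)]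
    ring_nf

/-- `u m h` (`m` the time, `h` the height) solves the first-step recurrence on the heights
`h ≥ 0` with source term `s` and the absorbing boundary value `0` at height `-1`. -/
structure IsHalfLineSolution (s u : ℕ → ℤ → ℤ) : Prop where
  boundary : ∀ m, u m (-1) = 0
  step : ∀ m h, 0 ≤ h → u (m + 1) h = u m (h + 1) + u m (h - 1) + s m h

namespace IsHalfLineSolution

variable {s t u v : ℕ → ℤ → ℤ}

theorem sub (hu : IsHalfLineSolution s u) (hv : IsHalfLineSolution t v) :
    IsHalfLineSolution (s - t) (u - v) where
  boundary m := by simp [hu.boundary, hv.boundary]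
  step m h hh := by
    simp only [Pi.sub_apply, hu.step m h hh, hv.step m h hh]
    ring

theorem eq_of_init (hu : IsHalfLineSolution s u) (hv : IsHalfLineSolution s v)
    (init : ∀ h, 0 ≤ h → u 0 h = v 0 h) (m : ℕ) {h : ℤ} (hh : -1 ≤ h) : u m h = v m h := by
  induction m generalizing h with
  | zero =>
    rcases hh.eq_or_lt with rfl | hpos
    · rw [hu.boundary, hv.boundary]
    · exact init h hpos
  | succ m ih =>
    rcases hh.eq_or_lt with rfl | hpos
    · rw [hu.boundary, hv.boundary]
    · rw [hu.step m h hpos, hv.step m h hpos, ih (by omega), ih (by omega)]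

end IsHalfLineSolution

/-- The half-line solution, zero at time `0`, with source `walkCount m c` at height `k - 1`. By
the method of images it is the solution on the whole line minus its mirror image in height `-1`. -/
def sourceSolution (k c : ℤ) (m : ℕ) (h : ℤ) : ℤ :=
  walkTail m (c + |h - k + 1|) - walkTail m (c + |h + k + 1|)

theorem isHalfLineSolution_sourceSolution {k : ℤ} (hk : 0 ≤ k) (c : ℤ) :
    IsHalfLineSolution (fun m h => if h + 1 = k then walkCount m c else 0)
      (sourceSolution k c) where
  boundary m := by simp [sourceSolution, show -1 - k + 1 = -k by ring]
  step m h hh := by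
    simp only [sourceSolution, walkTail_succ_add_abs, show h - k + 1 = 0 ↔ h + 1 = k by omega,
      show h + k + 1 ≠ 0 by omega, if_false]
    ring_nf

theorem sourceSolution_zero {c : ℤ} (hc : 0 ≤ c) (k h : ℤ) : sourceSolution k c 0 h = 0 := by
  rw [sourceSolution, walkTail_zero_of_nonneg (by positivity),
    walkTail_zero_of_nonneg (by positivity), sub_zero]

theorem sourceSolution_apply_zero {k : ℤ} (hk : 1 ≤ k) (c : ℤ) (m : ℕ) :
    sourceSolution k c m 0 = walkCount m (c + k) := by
  rw [sourceSolution, abs_of_nonpos (by omega), abs_of_nonneg (by omega), ← walkTail_sub]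
  ring_nf

theorem IsHalfLineSolution.eq_sourceSolution_sub {k c d : ℤ} {u : ℕ → ℤ → ℤ}
    (hu : IsHalfLineSolution
      (fun m h => if h + 1 = k then walkCount m c - walkCount m d else 0) u)
    (init : ∀ h, u 0 h = 0) (hk : 0 ≤ k) (hc : 0 ≤ c) (hd : 0 ≤ d) (m : ℕ) {h : ℤ}
    (hh : -1 ≤ h) : u m h = sourceSolution k c m h - sourceSolution k d m h := by
  refine hu.eq_of_init (v := sourceSolution k c - sourceSolution k d) ?_ ?_ m hh
  · convert (isHalfLineSolution_sourceSolution hk c).sub (isHalfLineSolution_sourceSolution hk d)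
    simp only [Pi.sub_apply]
    split_ifs <;> simp
  · intro h _
    simp [init, sourceSolution_zero, hc, hd]

/-! ### Marked up-steps of nonnegative paths -/

section Words

variable {m : ℕ} (w : Fin m → Bool) (h : ℤ)

theorem heightAt_zero : heightAt m w 0 = 0 := by
  simp [heightAt]

theorem heightAt_cons_succ (a : Bool) (k : ℕ) :
    heightAt (m + 1) (Fin.cons a w) (k + 1) = (bif a then 1 else -1) + heightAt m w k := by
  cases a <;> simp [heightAt, Fin.card_filter_univ_succ] <;> ring

variable {w} in
theorem heightAt_succ_of_up {i : Fin m} (hi : w i = true) :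
    heightAt m w (i + 1) = heightAt m w i + 1 := by
  have up : ({j | (j : ℕ) < i + 1 ∧ w j = true} : Finset (Fin m)) =
      insert i ({j | (j : ℕ) < i ∧ w j = true} : Finset (Fin m)) := by
    ext j
    simp only [mem_filter_univ, mem_insert]
    grind
  have down : ({j | (j : ℕ) < i + 1 ∧ w j = false} : Finset (Fin m)) =
      ({j | (j : ℕ) < i ∧ w j = false} : Finset (Fin m)) := by
    ext j
    simp only [mem_filter_univ]
    grind
  rw [heightAt, heightAt, up, down, card_insert_of_notMem (by simp)]
  push_cast
  ring

variable (m) in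
/-- The words of length `m` whose steps lead from height `h` to height `0` without going below
height `0`. -/
noncomputable def nonnegPaths : Finset (Fin m → Bool) :=
  {w | (∀ k ≤ m, 0 ≤ h + heightAt m w k) ∧ h + heightAt m w m = 0}

theorem dyckWords_eq_nonnegPaths (n : ℕ) : dyckWords n = nonnegPaths (2 * n) 0 := by
  ext w
  have height_end : heightAt (2 * n) w (2 * n) =
      (#{i | w i = true} : ℤ) - #{i | ¬ w i = true} := by
    simp [heightAt]
  have total := card_filter_add_card_filter_not (s := univ) fun i => w i = true
  rw [card_univ, Fintype.card_fin] at total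
  rw [dyckWords, nonnegPaths, mem_filter_univ, mem_filter_univ, IsDyck, and_comm]
  simp only [zero_add, height_end]
  refine and_congr_right' ?_
  omega

variable (m) in
theorem nonnegPaths_neg_one : nonnegPaths m (-1) = ∅ := by
  refine filter_eq_empty_iff.mpr fun w _ hw => ?_
  simpa [heightAt_zero] using hw.1 0 m.zero_le

theorem cons_mem_nonnegPaths (a : Bool) :
    Fin.cons a w ∈ nonnegPaths (m + 1) h ↔
      0 ≤ h ∧ w ∈ nonnegPaths m (h + bif a then 1 else -1) := by
  simp only [nonnegPaths, mem_filter_univ, heightAt_cons_succ, ← add_assoc, ← and_assoc]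
  refine and_congr_left' ⟨fun H => ⟨?_, fun k hk => ?_⟩, fun H k hk => ?_⟩
  · simpa [heightAt_zero] using H 0 (by omega)
  · simpa only [heightAt_cons_succ, ← add_assoc] using H (k + 1) (by omega)
  · cases k with
    | zero => simpa [heightAt_zero] using H.1
    | succ k => simpa only [heightAt_cons_succ, ← add_assoc] using H.2 k (by omega)

variable {h} in
theorem sum_nonnegPaths_succ {M : Type*} [AddCommMonoid M] (hh : 0 ≤ h)
    (f : (Fin (m + 1) → Bool) → M) :
    ∑ w ∈ nonnegPaths (m + 1) h, f w =
      ∑ w ∈ nonnegPaths m (h + 1), f (Fin.cons true w)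
        + ∑ w ∈ nonnegPaths m (h - 1), f (Fin.cons false w) := by
  rw [← Fintype.sum_ite_mem, ← (Fin.consEquiv fun _ => Bool).sum_comp,
    Fintype.sum_prod_type, Fintype.sum_bool]
  simp [Fin.consEquiv, cons_mem_nonnegPaths, hh, sub_eq_add_neg]

/-- The up-steps of `w` that end at height `l` when `w` starts at height `h`. -/
noncomputable def upStepsInto (l : ℤ) : Finset (Fin m) :=
  {i | w i = true ∧ h + heightAt m w (i + 1) = l}

theorem disjoint_upStepsInto {p q : ℤ} (hpq : p ≠ q) :
    Disjoint (upStepsInto w h p) (upStepsInto w h q) := by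
  rw [upStepsInto, upStepsInto, disjoint_filter]
  exact fun i _ hp hq => hpq (hp.2.symm.trans hq.2)

theorem card_upStepsInto_cons_true (l : ℤ) :
    #(upStepsInto (Fin.cons true w) h l) =
      #(upStepsInto w (h + 1) l) + if h + 1 = l then 1 else 0 := by
  simp only [upStepsInto, Fin.card_filter_univ_succ, heightAt_cons_succ, heightAt_zero, add_assoc,
    Fin.cons_zero, Fin.cons_succ, Fin.val_zero, Fin.val_succ, cond_true, true_and, add_zero]
  split_ifs <;> rfl

theorem card_upStepsInto_cons_false (l : ℤ) :
    #(upStepsInto (Fin.cons false w) h l) = #(upStepsInto w (h - 1) l) := by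
  simp [upStepsInto, Fin.card_filter_univ_succ, heightAt_cons_succ, sub_eq_add_neg, add_assoc]

theorem ltPairs_upStepsInto_cons_true (p q : ℤ) :
    ltPairs (upStepsInto (Fin.cons true w) h p) (upStepsInto (Fin.cons true w) h q) =
      ltPairs (upStepsInto w (h + 1) p) (upStepsInto w (h + 1) q)
        + if h + 1 = p then #(upStepsInto w (h + 1) q) else 0 := by
  simp [ltPairs, upStepsInto, sum_filter, filter_filter, Fin.sum_univ_succ,
    Fin.card_filter_univ_succ, heightAt_cons_succ, heightAt_zero, add_assoc, add_comm]

theorem ltPairs_upStepsInto_cons_false (p q : ℤ) :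
    ltPairs (upStepsInto (Fin.cons false w) h p) (upStepsInto (Fin.cons false w) h q) =
      ltPairs (upStepsInto w (h - 1) p) (upStepsInto w (h - 1) q) := by
  simp [ltPairs, upStepsInto, sum_filter, filter_filter, Fin.sum_univ_succ,
    Fin.card_filter_univ_succ, heightAt_cons_succ, sub_eq_add_neg, add_assoc]

end Words

theorem card_nonnegPaths (m : ℕ) {h : ℤ} (hh : -1 ≤ h) :
    (#(nonnegPaths m h) : ℤ) = walkCount m h - walkCount m (h + 2) := by
  have paths : IsHalfLineSolution 0 fun m h => (#(nonnegPaths m h) : ℤ) :=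
    { boundary := by simp [nonnegPaths_neg_one]
      step := fun m h hh => by
        simp only [card_eq_sum_ones, sum_nonnegPaths_succ hh, Nat.cast_add, Pi.zero_apply,
          add_zero] }
  have walks : IsHalfLineSolution 0 fun m h => walkCount m h - walkCount m (h + 2) :=
    { boundary := fun m => sub_eq_zero.mpr (walkCount_neg m 1)
      step := fun m h _ => by
        simp only [walkCount, Pi.zero_apply]
        ring_nf }
  refine paths.eq_of_init walks (fun h hh => ?_) m hh
  by_cases h_zero : h = 0
  · simp [nonnegPaths, walkCount, heightAt_zero, h_zero]
  · simp [nonnegPaths, walkCount, heightAt_zero, h_zero, show h + 2 ≠ 0 by omega]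

-- First-step decomposition: an initial up-step into level `k` leaves a path starting at `k`, so the
-- total of `Y` over such paths is the source at height `k - 1`.
theorem isHalfLineSolution_sum_nonnegPaths {X : ∀ m, ℤ → (Fin m → Bool) → ℤ}
    {Y : ∀ m, (Fin m → Bool) → ℤ} {k : ℤ}
    (up : ∀ m h w, X (m + 1) h (Fin.cons true w) = X m (h + 1) w + if h + 1 = k then Y m w else 0)
    (down : ∀ m h w, X (m + 1) h (Fin.cons false w) = X m (h - 1) w) :
    IsHalfLineSolution (fun m h => if h + 1 = k then ∑ w ∈ nonnegPaths m k, Y m w else 0)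
      fun m h => ∑ w ∈ nonnegPaths m h, X m h w where
  boundary m := by simp [nonnegPaths_neg_one]
  step m h hh := by
    rw [sum_nonnegPaths_succ hh]
    simp only [up, down, sum_add_distrib]
    split_ifs with h_eq
    · rw [h_eq]
      ring
    · simp

theorem sum_nonnegPaths_eq_sourceSolution_sub {X : ∀ m, ℤ → (Fin m → Bool) → ℤ}
    {Y : ∀ m, (Fin m → Bool) → ℤ} {k c d : ℤ}
    (up : ∀ m h w, X (m + 1) h (Fin.cons true w) = X m (h + 1) w + if h + 1 = k then Y m w else 0)
    (down : ∀ m h w, X (m + 1) h (Fin.cons false w) = X m (h - 1) w) (init : ∀ h w, X 0 h w = 0)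
    (source : ∀ m, ∑ w ∈ nonnegPaths m k, Y m w = walkCount m c - walkCount m d)
    (hk : 0 ≤ k) (hc : 0 ≤ c) (hd : 0 ≤ d) (m : ℕ) {h : ℤ} (hh : -1 ≤ h) :
    ∑ w ∈ nonnegPaths m h, X m h w = sourceSolution k c m h - sourceSolution k d m h := by
  have solution := isHalfLineSolution_sum_nonnegPaths up down
  simp only [source] at solution
  exact solution.eq_sourceSolution_sub (by simp [init]) hk hc hd m hh

/-- The number of up-steps into level `l`, over all words of `nonnegPaths m h`. -/
noncomputable def upStepTotal (l : ℤ) (m : ℕ) (h : ℤ) : ℤ :=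
  ∑ w ∈ nonnegPaths m h, (#(upStepsInto w h l) : ℤ)

/-- The number of pairs of an up-step into level `p` and a later up-step into level `q`, over all
words of `nonnegPaths m h`. -/
noncomputable def upStepPairTotal (p q : ℤ) (m : ℕ) (h : ℤ) : ℤ :=
  ∑ w ∈ nonnegPaths m h, (ltPairs (upStepsInto w h p) (upStepsInto w h q) : ℤ)

theorem upStepTotal_eq_sourceSolution {l : ℤ} (hl : 0 ≤ l) (m : ℕ) {h : ℤ} (hh : -1 ≤ h) :
    upStepTotal l m h = sourceSolution l l m h - sourceSolution l (l + 2) m h := by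
  refine sum_nonnegPaths_eq_sourceSolution_sub (X := fun m h w => (#(upStepsInto w h l) : ℤ))
    (Y := fun _ _ => 1) (fun m h w => ?_) (fun m h w => ?_) (fun h w => ?_) (fun m => ?_)
    hl hl (by omega) m hh
  · exact_mod_cast card_upStepsInto_cons_true w h l
  · rw [card_upStepsInto_cons_false]
  · simp [upStepsInto]
  · rw [← card_nonnegPaths m (by omega), card_eq_sum_ones, Nat.cast_sum, Nat.cast_one]

theorem upStepTotal_eq_walkCount_sub {l : ℤ} (hl : 0 ≤ l) (m : ℕ) {h : ℤ} (hh : -1 ≤ h) :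
    upStepTotal l m h = walkCount m (l + 1 + |h - l + 1|) - walkCount m (h + 2 * l + 2) := by
  rw [upStepTotal_eq_sourceSolution hl m hh, sourceSolution, sourceSolution, ← walkTail_sub,
    ← walkTail_sub, abs_of_nonneg (show 0 ≤ h + l + 1 by omega)]
  ring_nf

theorem upStepPairTotal_eq_sourceSolution {p q : ℤ} (hp : 0 ≤ p) (hq : 0 ≤ q) (m : ℕ) {h : ℤ}
    (hh : -1 ≤ h) :
    upStepPairTotal p q m h =
      sourceSolution p (q + 1 + |p - q + 1|) m h - sourceSolution p (p + 2 * q + 2) m h := by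
  refine sum_nonnegPaths_eq_sourceSolution_sub
    (X := fun m h w => (ltPairs (upStepsInto w h p) (upStepsInto w h q) : ℤ))
    (Y := fun m w => (#(upStepsInto w p q) : ℤ)) (fun m h w => ?_) (fun m h w => ?_)
    (fun h w => ?_) (fun m => ?_) hp (by positivity) (by positivity) m hh
  · rw [ltPairs_upStepsInto_cons_true]
    split_ifs with h_eq <;> simp [h_eq]
  · rw [ltPairs_upStepsInto_cons_false]
  · simp [ltPairs, upStepsInto]
  · rw [← upStepTotal_eq_walkCount_sub hq m (by omega), upStepTotal]

theorem upStepTotal_apply_zero {l : ℤ} (hl : 1 ≤ l) (m : ℕ) :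
    upStepTotal l m 0 = walkCount m (2 * l) - walkCount m (2 * (l + 1)) := by
  rw [upStepTotal_eq_walkCount_sub (by omega) m (by omega), abs_of_nonpos (by omega)]
  ring_nf

theorem upStepPairTotal_apply_zero_of_lt {p q : ℤ} (hp : 1 ≤ p) (hpq : p < q) (m : ℕ) :
    upStepPairTotal p q m 0 = walkCount m (2 * q) - walkCount m (2 * (p + q + 1)) := by
  rw [upStepPairTotal_eq_sourceSolution (by omega) (by omega) m (by omega),
    sourceSolution_apply_zero hp, sourceSolution_apply_zero hp, abs_of_nonpos (by omega)]
  ring_nf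

theorem upStepPairTotal_apply_zero_of_le {p q : ℤ} (hp : 1 ≤ p) (hq : 0 ≤ q) (hqp : q ≤ p) (m : ℕ) :
    upStepPairTotal p q m 0 = walkCount m (2 * (p + 1)) - walkCount m (2 * (p + q + 1)) := by
  rw [upStepPairTotal_eq_sourceSolution (by omega) (by omega) m (by omega),
    sourceSolution_apply_zero hp, sourceSolution_apply_zero hp, abs_of_nonneg (by omega)]
  ring_nf

/-! ### Breadth-first scores -/

section Trees

variable {n : ℕ} {w : Fin (2 * n) → Bool}

variable (w) in
theorem sum_nodesAtLevel_bfsScore (ℓ : ℕ) :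
    ∑ v ∈ nodesAtLevel n w ℓ, bfsScore n w v =
      ∑ i ∈ upStepsInto w 0 ℓ, bfsScore n w (some i) := by
  rw [nodesAtLevel, upStepsInto, sum_filter, sum_filter, Fintype.sum_option]
  simp [isNode, nodeLevel, bfsScore]

theorem mem_upStepsInto_zero {l : ℤ} {i : Fin (2 * n)} :
    i ∈ upStepsInto w 0 l ↔ w i = true ∧ nodeLevel n w (some i) = l := by
  rw [upStepsInto, mem_filter_univ, zero_add, nodeLevel]

theorem nodeLevel_pos_of_mem_dyckWords (hw : w ∈ dyckWords n) {i : Fin (2 * n)}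
    (hi : w i = true) : 0 < nodeLevel n w (some i) := by
  have := (mem_filter_univ w).mp hw |>.2 i i.is_lt.le
  rw [nodeLevel, heightAt_succ_of_up hi]
  omega

theorem totalB_zero (n : ℕ) : totalB n 0 = 0 := by
  refine sum_eq_zero fun w hw => ?_
  rw [sum_nodesAtLevel_bfsScore]
  refine sum_eq_zero fun i hi => ?_
  obtain ⟨up_i, level_i⟩ := mem_upStepsInto_zero.mp hi
  exact absurd level_i (nodeLevel_pos_of_mem_dyckWords hw up_i).ne'

theorem bfsScore_some (hw : w ∈ dyckWords n) {ℓ : ℕ} {i : Fin (2 * n)}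
    (hi : i ∈ upStepsInto w 0 ℓ) :
    bfsScore n w (some i) =
      1 + (∑ k ∈ Ico 1 ℓ, #(upStepsInto w 0 k) + #{j ∈ upStepsInto w 0 ℓ | j < i}) := by
  have disjoint_levels :
      (Ico 1 ℓ : Set ℕ).PairwiseDisjoint fun k => upStepsInto w 0 (k : ℤ) :=
    fun _ _ _ _ hne => disjoint_upStepsInto w 0 (Nat.cast_injective.ne hne)
  have disjoint_same_level :
      Disjoint ((Ico 1 ℓ).biUnion fun k => upStepsInto w 0 (k : ℤ))
        {j ∈ upStepsInto w 0 ℓ | j < i} := by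
    refine (disjoint_biUnion_left _ _ _).mpr fun k hk => ?_
    have k_ne : (k : ℤ) ≠ ℓ := mod_cast (mem_Ico.mp hk).2.ne
    exact (disjoint_upStepsInto w 0 k_ne).mono_right (filter_subset _ _)
  rw [bfsScore, ← card_biUnion disjoint_levels, ← card_union_of_disjoint disjoint_same_level]
  congr 2
  ext j
  have level_j_pos := nodeLevel_pos_of_mem_dyckWords hw (i := j)
  simp only [mem_filter, mem_univ, true_and, mem_union, mem_biUnion, mem_Ico,
    mem_upStepsInto_zero, (mem_upStepsInto_zero.mp hi).2]
  constructor
  · rintro ⟨up_j, lt | ⟨eq, lt⟩⟩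
    · refine .inl ⟨(nodeLevel n w (some j)).toNat, ?_⟩
      grind
    · exact .inr ⟨⟨up_j, eq⟩, lt⟩
  · rintro (⟨k, ⟨_, k_lt⟩, up_j, eq⟩ | ⟨⟨up_j, eq⟩, lt⟩)
    · exact ⟨up_j, .inl <| eq ▸ mod_cast k_lt⟩
    · exact ⟨up_j, .inr ⟨eq, lt⟩⟩

theorem sum_bfsScore_eq (hw : w ∈ dyckWords n) (ℓ : ℕ) :
    ∑ v ∈ nodesAtLevel n w ℓ, bfsScore n w v =
      #(upStepsInto w 0 ℓ)
        + (∑ k ∈ Ico 1 ℓ, (ltPairs (upStepsInto w 0 k) (upStepsInto w 0 ℓ)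
            + ltPairs (upStepsInto w 0 ℓ) (upStepsInto w 0 k))
          + ltPairs (upStepsInto w 0 ℓ) (upStepsInto w 0 ℓ)) := by
  have pairs (k : ℕ) (hk : k ∈ Ico 1 ℓ) :
      ltPairs (upStepsInto w 0 k) (upStepsInto w 0 ℓ)
        + ltPairs (upStepsInto w 0 ℓ) (upStepsInto w 0 k) =
        #(upStepsInto w 0 ℓ) * #(upStepsInto w 0 k) := by
    have k_ne : (k : ℤ) ≠ ℓ := mod_cast (mem_Ico.mp hk).2.ne
    rw [mul_comm #(upStepsInto w 0 ℓ),
      card_mul_card_eq_ltPairs_add_ltPairs (disjoint_upStepsInto w 0 k_ne)]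
  rw [sum_nodesAtLevel_bfsScore, sum_congr rfl fun i => bfsScore_some hw, sum_congr rfl pairs,
    ← mul_sum, ltPairs_eq_sum_card_filter_gt]
  simp only [sum_add_distrib, sum_const, smul_eq_mul, mul_one]

theorem totalB_eq_upStepPairTotal (n ℓ : ℕ) :
    (totalB n ℓ : ℤ) = upStepTotal ℓ (2 * n) 0
      + (∑ k ∈ Ico 1 ℓ, (upStepPairTotal k ℓ (2 * n) 0 + upStepPairTotal ℓ k (2 * n) 0)
        + upStepPairTotal ℓ ℓ (2 * n) 0) := by
  rw [totalB, sum_congr rfl fun w hw => sum_bfsScore_eq hw ℓ, dyckWords_eq_nonnegPaths]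
  push_cast
  simp only [sum_add_distrib, upStepTotal, upStepPairTotal]
  rw [sum_comm, sum_comm (t := Ico 1 ℓ)]

end Trees

theorem sum_Icc_add_one_two_mul {M : Type*} [AddCommMonoid M] (f : ℕ → M) {ℓ : ℕ} (hℓ : 1 ≤ ℓ) :
    ∑ j ∈ Icc (ℓ + 1) (2 * ℓ), f j =
      f (ℓ + 1) + ∑ k ∈ Ico 1 ℓ, f (k + (ℓ + 1)) := by
  rw [sum_Ico_add' f, ← Ico_add_one_right_eq_Icc, sum_eq_sum_Ico_succ_bot (by omega)]
  congr 2
  ring_nf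

theorem totalB_eq_walkCount (n ℓ : ℕ) :
    (totalB n ℓ : ℤ) = ℓ * walkCount (2 * n) (2 * ℓ) + (ℓ + 1) * walkCount (2 * n) (2 * (ℓ + 1))
      - walkCount (2 * n) (2 * (2 * ℓ + 1))
      - 2 * ∑ j ∈ Icc (ℓ + 1) (2 * ℓ), walkCount (2 * n) (2 * j) := by
  rcases Nat.eq_zero_or_pos ℓ with rfl | hℓ
  · simp [totalB_zero]
  have pair (k : ℕ) (hk : k ∈ Ico 1 ℓ) :
      upStepPairTotal k ℓ (2 * n) 0 + upStepPairTotal ℓ k (2 * n) 0 =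
        walkCount (2 * n) (2 * ℓ) + walkCount (2 * n) (2 * (ℓ + 1))
          - 2 * walkCount (2 * n) (2 * (k + (ℓ + 1) : ℕ)) := by
    rw [mem_Ico] at hk
    rw [upStepPairTotal_apply_zero_of_lt (by omega) (by omega),
      upStepPairTotal_apply_zero_of_le (by omega) (by omega) (by omega)]
    push_cast
    ring_nf
  rw [totalB_eq_upStepPairTotal, sum_congr rfl pair, upStepTotal_apply_zero (by omega),
    upStepPairTotal_apply_zero_of_le (by omega) (by omega) le_rfl, sum_sub_distrib, sum_const,
    Nat.card_Ico, nsmul_eq_mul, Nat.cast_sub hℓ, ← mul_sum,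
    sum_Icc_add_one_two_mul (fun j => walkCount (2 * n) (2 * j)) hℓ]
  push_cast
  ring_nf

end

/-- totalB(n,ℓ) = (n(2ℓ+1)/(n+ℓ+1))·C(2n, n-ℓ) − C(2n, n-2ℓ-1) − 2·∑_{j=ℓ+1}^{2ℓ} C(2n, n-j),
with the convention that binomials with negative lower index vanish. -/
theorem totalB_eq (n ℓ : ℕ) (h : ℓ ≤ n) :
    (totalB n ℓ : ℚ) =
      ((n : ℚ) * (2 * ℓ + 1) / (n + ℓ + 1)) * Nat.choose (2 * n) (n - ℓ)
        - ch (2 * n) ((n : ℤ) - 2 * ℓ - 1)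
        - 2 * ∑ j ∈ Finset.Icc (ℓ + 1) (2 * ℓ), ch (2 * n) ((n : ℤ) - j) := by
  have formula : (totalB n ℓ : ℚ) =
      ℓ * ch (2 * n) (n - ℓ) + (ℓ + 1) * ch (2 * n) (n - (ℓ + 1)) - ch (2 * n) (n - (2 * ℓ + 1))
        - 2 * ∑ j ∈ Finset.Icc (ℓ + 1) (2 * ℓ), ch (2 * n) (n - j) := by
    simp only [← walkCount_two_mul_eq_ch]
    exact_mod_cast totalB_eq_walkCount n ℓ
  rw [formula, mul_choose_eq_add_ch h, sub_sub (n : ℤ)]
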